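/- Existence of discrete, faithful, rational representations of surface groups in rank one: for every g ≥ 2, there exists an injective group homomorphism ρ from the genus-g surface group Σ_g to SL(2,ℝ) such that every matrix entry of every element of the image of ρ is rational (lies in the range of the coercion ℚ → ℝ) and the image of ρ is a discrete subgroup of SL(2,ℝ). -/

import Mathlib

/-- `SL(n,R)` carries the subspace topology induced from the space of matrices. -/
instance specialLinearGroupTopology (n : Type*) [DecidableEq n] [Fintype n]
    (R : Type*) [CommRing R] [TopologicalSpace R] :
    TopologicalSpace (Matrix.SpecialLinearGroup n R) :=
  TopologicalSpace.induced ((↑) : Matrix.SpecialLinearGroup n R → Matrix n n R) inferInstance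

/-- The surface relator `[a₁,b₁] ⋯ [a_g,b_g]` in the free group on `a₁,b₁,…,a_g,b_g`. -/
def surfaceRelator (g : ℕ) : FreeGroup (Fin g ⊕ Fin g) :=
  (List.ofFn fun i : Fin g =>
    FreeGroup.of (Sum.inl i) * FreeGroup.of (Sum.inr i) *
      (FreeGroup.of (Sum.inl i))⁻¹ * (FreeGroup.of (Sum.inr i))⁻¹).prod

/-- The genus-`g` surface group `Σ_g = ⟨a₁,b₁,…,a_g,b_g ∣ [a₁,b₁]⋯[a_g,b_g]⟩`. -/
abbrev SurfaceGroup (g : ℕ) : Type :=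
  PresentedGroup ({surfaceRelator g} : Set (FreeGroup (Fin g ⊕ Fin g)))

/-!
The two matrices `diag(3, 1/3)` and its conjugate by the rotation by 45° have rational entries and
generate a Schottky group, which uniformizes a one-holed torus. The reflection in the axis of its
boundary element is a rational matrix up to a scalar. Hence the mirror image of the group is
rational too, and both contain the boundary element. Ping-pong for amalgamated products, played with
the two intervals bounded by the fixed points of the boundary element, shows that together they
generate the amalgamated product, which is the group of the closed surface of genus two.

Discreteness and faithfulness are treated as one property: only `1` is mapped to matrices near `1`.
This property is inherited by subgroups, and for `g ≥ 2` the surface of genus `g` is a cyclic cover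
of the surface of genus two.
-/

open Filter Topology Monoid
open scoped commutatorElement

section Topology

variable {Γ G : Type*} [Group Γ] [Group G] [TopologicalSpace G]

theorem injective_of_eventually_fiber_subset_one {f : Γ →* G}
    (h : ∀ᶠ y in 𝓝 (1 : G), ∀ x, f x = y → x = 1) : Function.Injective f :=
  (injective_iff_map_eq_one f).2 h.self_of_nhds

theorem discreteTopology_range_of_eventually_fiber_subset_one [IsTopologicalGroup G]
    {f : Γ →* G} (h : ∀ᶠ y in 𝓝 (1 : G), ∀ x, f x = y → x = 1) :
    DiscreteTopology f.range := by
  refine discreteTopology_of_isOpen_singleton_one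
    (isOpen_singleton_iff_nhds_eq_pure _ |>.2 (le_antisymm ?_ (pure_le_nhds _)))
  rw [le_pure_iff, nhds_subtype_eq_comap]
  filter_upwards [preimage_mem_comap h]
  rintro ⟨_, x, rfl⟩ hx
  simp [hx x rfl]

theorem eventually_comp_fiber_subset_one {G' : Type*} [Group G'] [TopologicalSpace G']
    {f : Γ →* G} {e : G →* G'} (he : IsInducing e)
    (h : ∀ᶠ y in 𝓝 (1 : G), ∀ x, f x = y → x = 1) :
    ∀ᶠ y in 𝓝 (1 : G'), ∀ x, e.comp f x = y → x = 1 := by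
  rw [he.nhds_eq_comap, map_one, eventually_comap] at h
  exact h.mono fun y hy x hx => hy (f x) hx x rfl

end Topology

section SpecialLinearGroup

variable {n R : Type*} [DecidableEq n] [Fintype n] [CommRing R] [TopologicalSpace R]
  [IsTopologicalRing R]

-- Mathlib's topology on `SL(n, R)` agrees with the one above only after unfolding.
instance : IsTopologicalGroup (Matrix.SpecialLinearGroup n R) :=
  Matrix.SpecialLinearGroup.topologicalGroup

theorem continuous_specialLinearGroup_smul (v : n → R) :
    Continuous fun y : Matrix.SpecialLinearGroup n R => y • v :=
  continuous_induced_dom.matrix_mulVec continuous_const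

end SpecialLinearGroup

section Conj

variable {n R : Type*} [DecidableEq n] [Fintype n] [CommRing R]

/-- Conjugation on `SL(n, R)` by an element of `GL(n, R)`. -/
def conjBy (P : GL n R) : Matrix.SpecialLinearGroup n R →* Matrix.SpecialLinearGroup n R where
  toFun y := ⟨P * y * (P⁻¹ : GL n R), by rw [Matrix.det_units_conj, y.det_coe]⟩
  map_one' := Subtype.ext <| by simp
  map_mul' y z := Subtype.ext <| by
    change (P * (y * z) * (P⁻¹ : GL n R) : Matrix n n R) =
      P * y * (P⁻¹ : GL n R) * (P * z * (P⁻¹ : GL n R))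
    simp only [mul_assoc, Units.inv_mul_cancel_left]

theorem conjBy_smul (P : GL n R) (y : Matrix.SpecialLinearGroup n R) (v : n → R) :
    conjBy P y • v = P • y • P⁻¹ • v := by
  change ((P : Matrix n n R) * y * (P⁻¹ : GL n R)) • v = _
  rw [mul_smul, mul_smul]
  rfl

theorem conjBy_eq_self {P : GL n R} {y : Matrix.SpecialLinearGroup n R}
    (h : ∀ v : n → R, P • y • v = y • P • v) : conjBy P y = y := by
  refine Subtype.ext (Matrix.mulVec_injective (funext fun v => ?_))
  change conjBy P y • v = y • v
  rw [conjBy_smul, h, smul_inv_smul]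

end Conj

section Amalgam

variable {ι H Γ X : Type*} {G : ι → Type*} [Group H] [∀ i, Group (G i)] [Group Γ] [MulAction Γ X]
  {φ : ∀ i, H →* G i} {ρ : PushoutI φ →* Γ} {S : ι → Set X} {x : ι → X}

/-- Klein's ping-pong configuration for the amalgamated product of the `G i` over `H`, acting
through `ρ`: letters of `G i` outside the amalgamated subgroup throw every other `S j` into `S i`,
and miss the marked point `x i` while doing so. -/
structure AmalgamPingPong (ρ : PushoutI φ →* Γ) (S : ι → Set X) (x : ι → X) : Prop where
  disjoint : Pairwise fun i j => Disjoint (S i) (S j)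
  mem : ∀ i, x i ∈ S i
  smul_mem : ∀ ⦃i j⦄, i ≠ j → ∀ g ∉ (φ i).range, ∀ y ∈ S j,
    ρ (PushoutI.of i g) • y ∈ S i \ {x i}

theorem AmalgamPingPong.neWord_smul_mem (hS : AmalgamPingPong ρ S x) {i j : ι}
    (u : CoprodI.NeWord G i j) (hu : ∀ l ∈ u.toList, l.2 ∉ (φ l.1).range) (h : H) {k : ι}
    (hkj : k ≠ j) {y : X} (hy : y ∈ S k) :
    ρ (PushoutI.base φ h * PushoutI.ofCoprodI u.prod) • y ∈ S i \ {x i} := by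
  induction u generalizing h k y with
  | @singleton i g _ =>
    have hg : φ i h * g ∉ (φ i).range := by
      rw [Subgroup.mul_mem_cancel_left _ (MonoidHom.mem_range.2 ⟨h, rfl⟩)]
      exact hu ⟨i, g⟩ (List.mem_singleton_self _)
    simpa only [CoprodI.NeWord.prod_singleton, PushoutI.ofCoprodI_of, map_mul,
      PushoutI.of_apply_eq_base] using hS.smul_mem hkj.symm _ hg y hy
  | append u₁ hne u₂ ih₁ ih₂ =>
    simp only [CoprodI.NeWord.toList, List.mem_append] at hu
    have h₂ := ih₂ (fun l hl => hu l (.inr hl)) 1 hkj hy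
    have h₁ := ih₁ (fun l hl => hu l (.inl hl)) h hne.symm h₂.1
    simpa only [CoprodI.NeWord.append_prod, map_mul, map_one, one_mul, mul_smul] using h₁

theorem exists_eq_base_mul_neWord_prod (hφ : ∀ i, Function.Injective (φ i)) {w : PushoutI φ}
    (hw : w ∉ (PushoutI.base φ).range) :
    ∃ h i j, ∃ u : CoprodI.NeWord G i j, (∀ l ∈ u.toList, l.2 ∉ (φ l.1).range) ∧
      w = PushoutI.base φ h * PushoutI.ofCoprodI u.prod := by
  classical
  obtain ⟨d⟩ := PushoutI.NormalWord.transversal_nonempty φ hφ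
  obtain ⟨nw, rfl⟩ : ∃ nw : PushoutI.NormalWord d, nw.prod = w :=
    PushoutI.NormalWord.equiv.symm.surjective w
  have hne : nw.toWord ≠ .empty := fun h => hw ⟨nw.head, by simp [PushoutI.NormalWord.prod, h]⟩
  obtain ⟨i, j, u, hu⟩ := CoprodI.NeWord.of_word nw.toWord hne
  refine ⟨nw.head, i, j, u, fun l hl hmem => ?_, ?_⟩
  · have hl : l ∈ nw.toWord.toList := hu ▸ hl
    have hfactor := (d.compl l.1).1 (a₁ := (⟨l.2, hmem⟩, ⟨1, d.one_mem _⟩))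
      (a₂ := (1, ⟨l.2, nw.normalized _ _ hl⟩)) (by simp)
    exact nw.toWord.ne_one l hl (congrArg (fun p => (p.1 : G l.1)) hfactor)
  · rw [PushoutI.NormalWord.prod, ← hu]
    rfl

theorem AmalgamPingPong.mem_range_base [Nontrivial ι] (hS : AmalgamPingPong ρ S x)
    (hφ : ∀ i, Function.Injective (φ i)) {w : PushoutI φ} (hw : ∀ i, ρ w • x i ∈ S i)
    (hw' : ∀ i, (ρ w)⁻¹ • x i ∈ S i) :
    w ∈ (PushoutI.base φ).range := by
  by_contra hmem
  obtain ⟨h, i, j, u, hu, rfl⟩ := exists_eq_base_mul_neWord_prod hφ hmem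
  rcases eq_or_ne i j with rfl | hij
  · obtain ⟨k, hki⟩ := exists_ne i
    exact (hS.disjoint hki).notMem_of_mem_left (hw k) (hS.neWord_smul_mem u hu h hki (hS.mem k)).1
  · exact (hS.neWord_smul_mem u hu h hij (hw' i)).2 (smul_inv_smul _ _)

theorem AmalgamPingPong.eventually_mem_range_base [Nontrivial ι] [Finite ι] [TopologicalSpace Γ]
    [IsTopologicalGroup Γ] [TopologicalSpace X] (hS : AmalgamPingPong ρ S x)
    (hφ : ∀ i, Function.Injective (φ i)) (hopen : ∀ i, IsOpen (S i))
    (hcont : ∀ i, Continuous fun y : Γ => y • x i) :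
    ∀ᶠ y in 𝓝 (1 : Γ), ∀ w, ρ w = y → w ∈ (PushoutI.base φ).range := by
  have hnear : ∀ᶠ y in 𝓝 (1 : Γ), ∀ i, y • x i ∈ S i := by
    refine eventually_all.2 fun i => (hcont i).continuousAt.eventually_mem ((hopen i).mem_nhds ?_)
    rw [one_smul]
    exact hS.mem i
  have hinv : Tendsto (·⁻¹) (𝓝 (1 : Γ)) (𝓝 1) := by simpa using tendsto_inv (1 : Γ)
  filter_upwards [hnear, hinv.eventually hnear]
  rintro _ hw hw' w rfl
  exact hS.mem_range_base hφ hw hw'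

end Amalgam

section CyclicCover

namespace SurfaceGroup

variable {g : ℕ} {K : Type*} [Group K]

/-- The generator `a_{i+1}` of the surface group. -/
def a (i : Fin g) : SurfaceGroup g := PresentedGroup.of (Sum.inl i)

/-- The generator `b_{i+1}` of the surface group. -/
def b (i : Fin g) : SurfaceGroup g := PresentedGroup.of (Sum.inr i)

theorem prod_commutator_eq_one : (List.ofFn ⁅@a g, @b g⁆).prod = 1 := by
  have h := PresentedGroup.one_of_mem (rels := {surfaceRelator g}) rfl
  rwa [surfaceRelator, map_list_prod, List.map_ofFn] at h

theorem commutator_mul_commutator_eq_one : ⁅@a 2 0, @b 2 0⁆ * ⁅@a 2 1, @b 2 1⁆ = 1 := by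
  have h := prod_commutator_eq_one (g := 2)
  simp only [List.ofFn_succ, List.ofFn_zero, List.prod_cons, List.prod_nil, mul_one] at h
  exact h

/-- The homomorphism out of the surface group with `a i ↦ A i` and `b i ↦ B i`. -/
def lift (A B : Fin g → K) (h : (List.ofFn ⁅A, B⁆).prod = 1) : SurfaceGroup g →* K :=
  PresentedGroup.toGroup (f := Sum.elim A B) <| by
    rintro _ rfl
    simp only [surfaceRelator, map_list_prod, List.map_ofFn, Function.comp_def, map_mul, map_inv,
      FreeGroup.lift_apply_of, Sum.elim_inl, Sum.elim_inr]
    exact h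

variable {A B : Fin g → K} {h : (List.ofFn ⁅A, B⁆).prod = 1}

@[simp]
theorem lift_a (i : Fin g) : lift A B h (a i) = A i := PresentedGroup.toGroup.of _

@[simp]
theorem lift_b (i : Fin g) : lift A B h (b i) = B i := PresentedGroup.toGroup.of _

theorem hom_ext {f₁ f₂ : SurfaceGroup g →* K} (ha : ∀ i, f₁ (a i) = f₂ (a i))
    (hb : ∀ i, f₁ (b i) = f₂ (b i)) : f₁ = f₂ :=
  PresentedGroup.ext (Sum.rec ha hb)

theorem closure_range_a_union_range_b :
    Subgroup.closure (Set.range (a : Fin g → _) ∪ Set.range b) = ⊤ := by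
  rw [← PresentedGroup.closure_range_of, ← Set.Sum.elim_range]
  congr 2
  ext (i | i) <;> rfl

end SurfaceGroup

theorem prod_ofFn_conj_pow {G : Type*} [Group G] (x k : G) (m : ℕ) :
    (List.ofFn fun i : Fin m => x ^ (i : ℕ) * k * (x ^ (i : ℕ))⁻¹).prod =
      (k * x) ^ m * (x ^ m)⁻¹ := by
  induction m with
  | zero => simp
  | succ m ih =>
    rw [List.ofFn_succ', List.concat_eq_append, List.prod_append]
    simp only [Fin.val_castSucc, ih, Fin.val_last, List.prod_singleton, pow_succ, mul_inv_rev]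
    group

theorem injective_of_equivariant_embedding {K G X : Type*} [Group K] [Group G] [MulAction G X]
    {f : K →* G} {j : K → X} (hj : Function.Injective j) {s : Set K}
    (hs : Subgroup.closure s = ⊤) (hf : ∀ y ∈ s, ∀ x, f y • j x = j (y * x)) :
    Function.Injective f := by
  have equivariant : ∀ y x, f y • j x = j (y * x) := by
    intro y
    induction hs ▸ Subgroup.mem_top y using Subgroup.closure_induction with
    | mem y hy => exact hf y hy
    | one => simp
    | mul y z _ _ hy hz => intro x; rw [map_mul, mul_smul, hz, hy, mul_assoc]
    | inv y _ hy => intro x; rw [map_inv, inv_smul_eq_iff, hy, mul_inv_cancel_left]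
  refine (injective_iff_map_eq_one f).2 fun y hy => ?_
  exact hj (by simpa [hy] using (equivariant y 1).symm)

/-- Left multiplication by `t i` on the `i`-th of the copies of `K` indexed by `I`. -/
def fiberwiseMul (I K : Type*) [Group K] : (I → K) →* Equiv.Perm (I × K) where
  toFun t := Equiv.prodShear (Equiv.refl I) fun i => Equiv.mulLeft (t i)
  map_one' := by ext <;> simp
  map_mul' s t := by ext <;> simp

@[simp]
theorem fiberwiseMul_apply {I K : Type*} [Group K] (t : I → K) (p : I × K) :
    fiberwiseMul I K t p = (p.1, t p.1 * p.2) := rfl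

/-- The cyclic shift of the `n + 1` copies of `K` that multiplies by `x` on the left when passing
from the last copy back to the first. -/
def sheetShift {K : Type*} [Group K] (n : ℕ) (x : K) : Equiv.Perm (Fin (n + 1) × K) :=
  Equiv.prodShear (finRotate (n + 1)) fun i => Equiv.mulLeft (if i = Fin.last n then x else 1)

section SheetShift

variable {K : Type*} [Group K] {n : ℕ}

@[simp]
theorem sheetShift_castSucc (x y : K) (i : Fin n) :
    sheetShift n x (i.castSucc, y) = (i.succ, y) := by
  simp [sheetShift, Fin.castSucc_ne_last]

@[simp]
theorem sheetShift_last (x y : K) : sheetShift n x (Fin.last n, y) = (0, x * y) := by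
  simp [sheetShift]

theorem sheetShift_pow_apply_zero (x y : K) (i : Fin (n + 1)) :
    (sheetShift n x ^ (i : ℕ)) (0, y) = (i, y) := by
  induction i using Fin.induction with
  | zero => simp
  | succ i ih =>
    rw [Fin.val_castSucc] at ih
    rw [Fin.val_succ, pow_succ', Equiv.Perm.mul_apply, ih, sheetShift_castSucc]

theorem sheetShift_pow_succ_apply_zero (x y : K) :
    (sheetShift n x ^ (n + 1)) (0, y) = (0, x * y) := by
  have h := sheetShift_pow_apply_zero x y (Fin.last n)
  rw [Fin.val_last] at h
  rw [pow_succ', Equiv.Perm.mul_apply, h, sheetShift_last]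

theorem conj_inv_sheetShift_pow_apply_zero (x y : K) (t : Fin (n + 1) → K) (i : Fin (n + 1)) :
    ((sheetShift n x)⁻¹ ^ (i : ℕ) * fiberwiseMul _ K t * ((sheetShift n x)⁻¹ ^ (i : ℕ))⁻¹) (0, y) =
      (0, t i * y) := by
  rw [inv_pow, inv_inv, Equiv.Perm.mul_apply, Equiv.Perm.mul_apply, sheetShift_pow_apply_zero,
    Equiv.Perm.inv_eq_iff_eq, sheetShift_pow_apply_zero, fiberwiseMul_apply]

end SheetShift

section DeckAction

variable {K : Type*} [Group K] {n : ℕ} {α β : K}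

/-- The element by which `b 0` of the genus-two group acts on the `i`-th sheet in `deckAction`; its
dependence on `i` is forced by the relation of the genus-two group. -/
def sheetTransport (β : K) (k : Fin (n + 1) → K) (i : Fin (n + 1)) : K :=
  (Fin.partialProd k i.castSucc)⁻¹ * β

theorem fiberwiseMul_sheetTransport_mul_sheetShift {k : Fin (n + 1) → K}
    (h : ⁅α, β⁆ * (List.ofFn k).prod = 1) :
    fiberwiseMul _ K (sheetTransport β k) * sheetShift n α⁻¹ =
      sheetShift n α⁻¹ * (fiberwiseMul _ K k)⁻¹ * fiberwiseMul _ K (sheetTransport β k) := by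
  rw [← map_inv]
  ext1 ⟨i, y⟩
  induction i using Fin.lastCases with
  | cast i =>
    simp only [sheetTransport, Fin.partialProd_succ, Equiv.Perm.mul_apply, fiberwiseMul_apply,
      sheetShift_castSucc, Pi.inv_apply, ← Fin.succ_castSucc, mul_inv_rev, mul_assoc]
  | last =>
    have hprod : Fin.partialProd k (Fin.last n).castSucc * k (Fin.last n) = ⁅β, α⁆ := by
      rw [← Fin.partialProd_succ, ← commutatorElement_inv, eq_inv_iff_mul_eq_one]
      rw [Fin.partialProd, List.take_of_length_le (by simp), mul_eq_one_comm.1 h]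
    simp only [sheetTransport, Equiv.Perm.mul_apply, fiberwiseMul_apply, sheetShift_last,
      Pi.inv_apply, eq_mul_inv_of_mul_eq hprod, commutatorElement_def, Fin.castSucc_zero,
      Fin.partialProd_zero]
    group

variable {A B : Fin (n + 1) → K}

/-- The action of the genus-two group on `n + 1` sheets `K` which is induced from the left
translation action of `K` when `K` is the group of the cyclic cover, generated by `α`, `β`, `A i`
and `B i`. -/
def deckAction (h : ⁅α, β⁆ * (List.ofFn ⁅A, B⁆).prod = 1) :
    SurfaceGroup 2 →* Equiv.Perm (Fin (n + 1) × K) :=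
  SurfaceGroup.lift ![(sheetShift n α⁻¹)⁻¹, fiberwiseMul _ K A]
    ![fiberwiseMul _ K (sheetTransport β ⁅A, B⁆), fiberwiseMul _ K B] <| by
    have key := fiberwiseMul_sheetTransport_mul_sheetShift h
    rw [map_commutatorElement] at key
    simp only [List.ofFn_succ, List.ofFn_zero, List.prod_cons, List.prod_nil, mul_one]
    change ⁅(sheetShift n α⁻¹)⁻¹, fiberwiseMul _ K (sheetTransport β ⁅A, B⁆)⁆ *
      ⁅fiberwiseMul _ K A, fiberwiseMul _ K B⁆ = 1
    rw [mul_eq_one_iff_eq_inv, commutatorElement_def, inv_inv, mul_assoc _ _ (sheetShift _ _), key]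
    group

end DeckAction

section Cover

open SurfaceGroup

variable {K : Type*} [Group K] {x y u v : K}

/-- `cyclicConj n z x w = (z, w, x w x⁻¹, x² w x⁻², …)`, the shape of the generators of the cyclic
cover of degree `n` in terms of those of the genus-two group. -/
def cyclicConj (n : ℕ) (z x w : K) : Fin (n + 1) → K :=
  Fin.cons z fun i => x ^ (i : ℕ) * w * (x ^ (i : ℕ))⁻¹

theorem prod_commutator_cyclicConj (n : ℕ) (h : ⁅x, y⁆ * ⁅u, v⁆ = 1) :
    (List.ofFn ⁅cyclicConj n (x ^ n) x u, cyclicConj n y x v⁆).prod = 1 := by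
  have hk : ⁅u, v⁆ * x = y * x * y⁻¹ := by
    rw [eq_inv_of_mul_eq_one_right h, commutatorElement_inv, commutatorElement_def]
    group
  have hcomm : ⁅cyclicConj n (x ^ n) x u, cyclicConj n y x v⁆ =
      cyclicConj n ⁅x ^ n, y⁆ x ⁅u, v⁆ := by
    funext i
    exact Fin.cases rfl (fun i => (conjugate_commutatorElement _ _ _).symm) i
  rw [hcomm, cyclicConj, List.ofFn_cons, List.prod_cons, prod_ofFn_conj_pow, hk, conj_pow,
    commutatorElement_def]
  group

/-- The homomorphism of surface groups induced by the cyclic cover of degree `n + 1` of the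
genus-two surface given by `a 0 ↦ 1 ∈ ℤ/(n + 1)`, all other generators mapping to `0`. -/
def cyclicCover (n : ℕ) : SurfaceGroup (n + 2) →* SurfaceGroup 2 :=
  lift (cyclicConj (n + 1) (a 0 ^ (n + 1)) (a 0) (a 1))
    (cyclicConj (n + 1) (b 0) (a 0) (b 1)) <|
    prod_commutator_cyclicConj (n + 1) commutator_mul_commutator_eq_one

/-- `SurfaceGroup (n + 2)` is embedded in `Fin (n + 1) × SurfaceGroup (n + 2)` as the sheet `0`,
on which the image of the cover acts through left translations. -/
theorem cyclicCover_injective (n : ℕ) : Function.Injective (cyclicCover n) := by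
  have h := prod_commutator_eq_one (g := n + 2)
  rw [List.ofFn_succ, List.prod_cons] at h
  let Φ := deckAction (A := Fin.tail a) (B := Fin.tail b) h
  suffices Function.Injective (Φ.comp (cyclicCover n)) from .of_comp this
  refine injective_of_equivariant_embedding (Prod.mk_right_injective (0 : Fin (n + 1)))
    closure_range_a_union_range_b ?_
  rintro _ (⟨i, rfl⟩ | ⟨i, rfl⟩) x <;> cases i using Fin.cases <;>
    simp only [Φ, cyclicCover, deckAction, cyclicConj, MonoidHom.comp_apply, lift_a, lift_b,
      Fin.cons_zero, Fin.cons_succ, map_pow, map_mul, map_inv, Equiv.Perm.smul_def,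
      Matrix.cons_val_zero, Matrix.cons_val_one, conj_inv_sheetShift_pow_apply_zero]
  case inl.zero =>
    rw [inv_pow, Equiv.Perm.inv_eq_iff_eq, sheetShift_pow_succ_apply_zero, inv_mul_cancel_left]
  case inl.succ => rfl
  case inr.zero => simp [sheetTransport]
  case inr.succ => rfl

end Cover

end CyclicCover

namespace HoledTorus

/-- The loop around the hole of the one-holed torus, whose fundamental group is `FreeGroup Bool`. -/
def boundary : FreeGroup Bool := ⁅FreeGroup.of true, FreeGroup.of false⁆

/-- The hyperbolic matrices representing the generators of the free group. The second is the first
conjugated by the rotation of the plane by 45°. -/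
def genMatrix : Bool → Matrix.SpecialLinearGroup (Fin 2) ℚ
  | true => ⟨!![3, 0; 0, 1/3], by norm_num [Matrix.det_fin_two]⟩
  | false => ⟨!![5/3, 4/3; 4/3, 5/3], by norm_num [Matrix.det_fin_two]⟩

/-- The representation of the group of the one-holed torus as a Schottky group. -/
def rep : FreeGroup Bool →* Matrix.SpecialLinearGroup (Fin 2) ℚ := FreeGroup.lift genMatrix

/-- The cyclic order on the letters in which their attracting arcs occur on the projective line. A
letter `(x, e)` stands for the generator `x` if `e = true` and for its inverse otherwise. On the
plane, `rot` corresponds to the rotation by 45°. -/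
def rot : Bool × Bool → Bool × Bool
  | (true, e) => (false, e)
  | (false, e) => (true, !e)

/-- The quadratic form that is negative exactly in the attracting arc of a letter. A letter maps
the complement of the closed arc of its inverse onto its own arc. -/
def arcForm : Bool × Bool → (Fin 2 → ℚ) → ℚ
  | (true, true), v => 9 * v 1 ^ 2 - v 0 ^ 2
  | (true, false), v => 9 * v 0 ^ 2 - v 1 ^ 2
  | (false, true), v => 4 * v 0 ^ 2 - 10 * v 0 * v 1 + 4 * v 1 ^ 2
  | (false, false), v => 4 * v 0 ^ 2 + 10 * v 0 * v 1 + 4 * v 1 ^ 2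

/-- The quadratic form that is negative exactly in `I l`, the component of the domain of
discontinuity that covers the gap between the attracting arcs of the letters `l` and `rot l`. The
endpoints of `I (true, true)` are the fixed points of `rep boundary`; `corner l` maps them to those
of `I l`. -/
def gapForm : Bool × Bool → (Fin 2 → ℚ) → ℚ
  | (true, true), v => v 0 ^ 2 - 8 * v 0 * v 1 + 9 * v 1 ^ 2
  | (false, true), v => 9 * v 0 ^ 2 - 8 * v 0 * v 1 + v 1 ^ 2
  | (true, false), v => 9 * v 0 ^ 2 + 8 * v 0 * v 1 + v 1 ^ 2
  | (false, false), v => v 0 ^ 2 + 8 * v 0 * v 1 + 9 * v 1 ^ 2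

/-- The linear action of a letter on the plane in coordinates. -/
def letterAct : Bool × Bool → (Fin 2 → ℚ) → Fin 2 → ℚ
  | (true, true), v => ![3 * v 0, v 1 / 3]
  | (true, false), v => ![v 0 / 3, 3 * v 1]
  | (false, true), v => ![5 / 3 * v 0 + 4 / 3 * v 1, 4 / 3 * v 0 + 5 / 3 * v 1]
  | (false, false), v => ![5 / 3 * v 0 - 4 / 3 * v 1, 5 / 3 * v 1 - 4 / 3 * v 0]

theorem rep_mk_cons (l : Bool × Bool) (w : List (Bool × Bool)) (v : Fin 2 → ℚ) :
    rep (FreeGroup.mk (l :: w)) • v = rep (FreeGroup.mk [l]) • rep (FreeGroup.mk w) • v := by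
  rw [← mul_smul, ← map_mul, FreeGroup.mul_mk, List.singleton_append]

theorem genMatrix_smul (x : Bool) (v : Fin 2 → ℚ) : genMatrix x • v = letterAct (x, true) v := by
  cases x
  · exact Matrix.mulVec_fin_two _ v
  · refine (Matrix.mulVec_fin_two _ v).trans ?_
    simp [genMatrix, letterAct, div_eq_inv_mul]

theorem rep_letter_smul (l : Bool × Bool) (v : Fin 2 → ℚ) :
    rep (FreeGroup.mk [l]) • v = letterAct l v := by
  rcases l with ⟨x, _ | _⟩
  · have hinv : rep (FreeGroup.mk [(x, false)]) = (genMatrix x)⁻¹ := by simp [rep]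
    rw [hinv, inv_smul_eq_iff, genMatrix_smul]
    ext i
    cases x <;> fin_cases i <;> simp [letterAct] <;> ring
  · have hgen : rep (FreeGroup.mk [(x, true)]) = genMatrix x := by simp [rep]
    rw [hgen, genMatrix_smul]

theorem gapForm_rep_letter (l : Bool × Bool) (v : Fin 2 → ℚ) :
    gapForm l (rep (FreeGroup.mk [l]) • v) = gapForm (rot l) v := by
  rw [rep_letter_smul]
  rcases l with ⟨_ | _, _ | _⟩ <;>
    simp only [letterAct, gapForm, rot, Bool.not_true, Bool.not_false, Matrix.cons_val_zero,
      Matrix.cons_val_one] <;> ring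

theorem arcForm_rep_letter (l : Bool × Bool) (v : Fin 2 → ℚ) :
    arcForm l (rep (FreeGroup.mk [l]) • v) = -arcForm (rot (rot l)) v := by
  rw [rep_letter_smul]
  rcases l with ⟨_ | _, _ | _⟩ <;>
    simp only [letterAct, arcForm, rot, Bool.not_true, Bool.not_false, Matrix.cons_val_zero,
      Matrix.cons_val_one] <;> ring

-- Disjointness of the intervals of two forms takes the shape that their sum is nonnegative.
theorem arcForm_add_arcForm_nonneg {l t : Bool × Bool} (h : l ≠ t) (v : Fin 2 → ℚ) :
    0 ≤ arcForm l v + arcForm t v := by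
  rcases l with ⟨_ | _, _ | _⟩ <;> rcases t with ⟨_ | _, _ | _⟩ <;> first
    | exact absurd rfl h
    | simp only [arcForm]
      nlinarith [sq_nonneg (v 0), sq_nonneg (v 1), sq_nonneg (v 0 - v 1),
        sq_nonneg (v 0 + v 1)]

theorem gapForm_add_gapForm_nonneg {l t : Bool × Bool} (h : l ≠ t) (v : Fin 2 → ℚ) :
    0 ≤ gapForm l v + gapForm t v := by
  rcases l with ⟨_ | _, _ | _⟩ <;> rcases t with ⟨_ | _, _ | _⟩ <;> first
    | exact absurd rfl h
    | simp only [gapForm]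
      nlinarith [sq_nonneg (v 0), sq_nonneg (v 1), sq_nonneg (v 0 - v 1),
        sq_nonneg (v 0 + v 1)]

theorem arcForm_add_gapForm_nonneg {l t : Bool × Bool} (h : l ≠ t) (h' : l ≠ rot t)
    (v : Fin 2 → ℚ) : 0 ≤ arcForm l v + gapForm t v := by
  rcases l with ⟨_ | _, _ | _⟩ <;> rcases t with ⟨_ | _, _ | _⟩ <;> first
    | exact absurd rfl h
    | exact absurd rfl h'
    | simp only [arcForm, gapForm]
      nlinarith [sq_nonneg (v 0), sq_nonneg (v 1), sq_nonneg (v 0 - v 1),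
        sq_nonneg (v 0 + v 1)]

theorem rot_injective : Function.Injective rot := by decide

theorem rot_rot (l : Bool × Bool) : rot (rot l) = (l.1, !l.2) := by
  rcases l with ⟨_ | _, _⟩ <;> rfl

theorem rot_rot_rot_rot (l : Bool × Bool) : rot (rot (rot (rot l))) = l := by
  simp only [rot_rot, Bool.not_not]

theorem mk_rot_rot (l : Bool × Bool) :
    FreeGroup.mk [rot (rot l)] = (FreeGroup.mk [l])⁻¹ := by
  rw [FreeGroup.inv_mk, rot_rot]
  rfl

theorem isReduced_cons_iff_ne_rot_rot {s t : Bool × Bool} {w : List (Bool × Bool)} :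
    FreeGroup.IsReduced (s :: t :: w) ↔ t ≠ rot (rot s) ∧ FreeGroup.IsReduced (t :: w) := by
  rw [FreeGroup.isReduced_cons_cons, rot_rot]
  rcases s with ⟨_ | _, _ | _⟩ <;> rcases t with ⟨_ | _, _ | _⟩ <;> simp

theorem gapForm_rot_rep_letter (l : Bool × Bool) (v : Fin 2 → ℚ) :
    gapForm (rot (rot (rot l))) (rep (FreeGroup.mk [l]) • v) = gapForm (rot (rot l)) v := by
  rw [← gapForm_rep_letter, mk_rot_rot, map_inv, inv_smul_smul]

theorem arcForm_rep_letter_pos {s t : Bool × Bool} {v : Fin 2 → ℚ}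
    (harc : 0 < arcForm (rot (rot s)) v) (hst : s ≠ t) :
    0 < arcForm t (rep (FreeGroup.mk [s]) • v) := by
  linarith [arcForm_rep_letter s v, arcForm_add_arcForm_nonneg hst (rep (FreeGroup.mk [s]) • v)]

theorem gapForm_rep_letter_pos {s : Bool × Bool} {v : Fin 2 → ℚ}
    (harc : 0 < arcForm (rot (rot s)) v) (hgap : 0 < gapForm (rot s) v)
    (hgap' : 0 < gapForm (rot (rot s)) v) (t : Bool × Bool) :
    0 < gapForm t (rep (FreeGroup.mk [s]) • v) := by
  rcases eq_or_ne s t with rfl | hst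
  · rwa [gapForm_rep_letter]
  rcases eq_or_ne s (rot t) with rfl | hst'
  · rwa [← gapForm_rot_rep_letter, rot_rot_rot_rot] at hgap'
  · linarith [arcForm_rep_letter s v,
      arcForm_add_gapForm_nonneg hst hst' (rep (FreeGroup.mk [s]) • v)]

/-- The elements of the free group that map the interval `I (true, true)` of `gapForm` to `I l`.
They form a coset of the stabilizer of `I (true, true)`. -/
def corner : Bool × Bool → FreeGroup Bool ⧸ Subgroup.zpowers boundary
  | (true, true) => ↑(1 : FreeGroup Bool)
  | (false, true) => ↑(FreeGroup.of true)⁻¹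
  | (true, false) => ↑((FreeGroup.of false)⁻¹ * (FreeGroup.of true)⁻¹)
  | (false, false) => ↑(FreeGroup.of true * (FreeGroup.of false)⁻¹ * (FreeGroup.of true)⁻¹)

theorem mk_smul_corner_rot (s : Bool × Bool) :
    FreeGroup.mk [s] • corner (rot s) = corner s := by
  rcases s with ⟨_ | _, _ | _⟩
  · exact QuotientGroup.eq.2 ⟨-1, by decide⟩
  all_goals exact QuotientGroup.eq.2 ⟨0, by decide⟩

theorem mk_smul_corner_rot_rot (s : Bool × Bool) :
    FreeGroup.mk [s] • corner (rot (rot s)) = corner (rot (rot (rot s))) := by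
  rw [← mk_smul_corner_rot (rot (rot s)), mk_rot_rot, smul_inv_smul]

/-- Follow the interval `I (true, true)` while the letters of `w` are applied from
the right: it stays one of the four intervals `I t` until a letter moves it into its attracting arc,
and from then on it stays in the attracting arc of the last letter. -/
theorem exists_corner_or_forall_pos {w : List (Bool × Bool)} (hw : FreeGroup.IsReduced w) :
    (∃ t, (FreeGroup.mk w : FreeGroup Bool ⧸ Subgroup.zpowers boundary) = corner t ∧
      ∀ v, gapForm t (rep (FreeGroup.mk w) • v) = gapForm (true, true) v) ∨
    ∀ v, gapForm (true, true) v < 0 → (∀ t, 0 < gapForm t (rep (FreeGroup.mk w) • v)) ∧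
      ∀ s, FreeGroup.IsReduced (s :: w) → 0 < arcForm (rot (rot s)) (rep (FreeGroup.mk w) • v) := by
  induction w with
  | nil =>
    refine .inl ⟨(true, true), rfl, fun v => ?_⟩
    rw [← FreeGroup.one_eq_mk, map_one, one_smul]
  | cons s w ih =>
    have hmk : (FreeGroup.mk (s :: w) : FreeGroup Bool ⧸ Subgroup.zpowers boundary) =
      FreeGroup.mk [s] • (FreeGroup.mk w : FreeGroup Bool ⧸ Subgroup.zpowers boundary) := rfl
    simp only [rep_mk_cons s w, hmk]
    rcases ih (hw.infix (List.suffix_cons s w).isInfix) with ⟨t, ht, hgap⟩ | hpos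
    · rw [ht]
      rcases eq_or_ne t (rot s) with rfl | hts
      · exact .inl ⟨s, mk_smul_corner_rot s, fun v => by rw [gapForm_rep_letter, hgap]⟩
      rcases eq_or_ne (rot (rot s)) t with rfl | hts'
      · exact .inl ⟨rot (rot (rot s)), mk_smul_corner_rot_rot s, fun v => by
          rw [gapForm_rot_rep_letter, hgap]⟩
      refine .inr fun v hv => ?_
      rw [← hgap] at hv
      have harc : 0 < arcForm (rot (rot s)) (rep (FreeGroup.mk w) • v) := by
        linarith [arcForm_add_gapForm_nonneg hts' (rot_injective.ne hts.symm)
          (rep (FreeGroup.mk w) • v)]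
      have hgap₁ := gapForm_add_gapForm_nonneg hts (rep (FreeGroup.mk w) • v)
      have hgap₂ := gapForm_add_gapForm_nonneg hts' (rep (FreeGroup.mk w) • v)
      exact ⟨gapForm_rep_letter_pos harc (by linarith) (by linarith), fun s' hs' =>
        arcForm_rep_letter_pos harc (isReduced_cons_iff_ne_rot_rot.1 hs').1⟩
    · refine .inr fun v hv => ?_
      obtain ⟨hgap, harc⟩ := hpos v hv
      exact ⟨gapForm_rep_letter_pos (harc s hw) (hgap _) (hgap _), fun s' hs' =>
        arcForm_rep_letter_pos (harc s hw) (isReduced_cons_iff_ne_rot_rot.1 hs').1⟩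

theorem gapForm_rep_smul_pos {g : FreeGroup Bool} (hg : g ∉ Subgroup.zpowers boundary)
    {v : Fin 2 → ℚ} (hv : gapForm (true, true) v < 0) : 0 < gapForm (true, true) (rep g • v) := by
  have h := exists_corner_or_forall_pos (FreeGroup.isReduced_toWord (x := g))
  rw [FreeGroup.mk_toWord] at h
  rcases h with ⟨t, ht, hgap⟩ | hpos
  · have hne : t ≠ (true, true) := by
      rintro rfl
      exact hg (by simpa using QuotientGroup.eq.1 ht)
    linarith [hgap v, gapForm_add_gapForm_nonneg hne (rep g • v)]
  · exact (hpos v hv).1 _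

theorem arcForm_rep_smul_pos {w : List (Bool × Bool)} {s : Bool × Bool}
    (hw : FreeGroup.IsReduced (s :: w)) {v : Fin 2 → ℚ} (hv : ∀ t, 0 < arcForm t v) :
    0 < arcForm (rot (rot s)) (rep (FreeGroup.mk w) • v) := by
  induction w generalizing s with
  | nil => simpa only [← FreeGroup.one_eq_mk, map_one, one_smul] using hv _
  | cons t w ih =>
    obtain ⟨hne, hw⟩ := isReduced_cons_iff_ne_rot_rot.1 hw
    rw [rep_mk_cons]
    exact arcForm_rep_letter_pos (ih hw) hne

theorem exists_arcForm_rep_smul_neg {g : FreeGroup Bool} (hg : g ≠ 1) {v : Fin 2 → ℚ}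
    (hv : ∀ t, 0 < arcForm t v) : ∃ s, arcForm s (rep g • v) < 0 := by
  have hw := FreeGroup.isReduced_toWord (x := g)
  rw [← FreeGroup.mk_toWord (x := g)]
  cases h : g.toWord with
  | nil => exact absurd (FreeGroup.toWord_eq_nil_iff.1 h) hg
  | cons s w =>
    refine ⟨s, ?_⟩
    rw [rep_mk_cons, arcForm_rep_letter, neg_lt_zero]
    exact arcForm_rep_smul_pos (h ▸ hw) hv

theorem continuous_arcForm (t : Bool × Bool) : Continuous (arcForm t) := by
  rcases t with ⟨_ | _, _ | _⟩ <;> unfold arcForm <;> fun_prop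

theorem continuous_gapForm (t : Bool × Bool) : Continuous (gapForm t) := by
  rcases t with ⟨_ | _, _ | _⟩ <;> unfold gapForm <;> fun_prop

theorem eventually_rep_fiber_subset_one :
    ∀ᶠ y in 𝓝 (1 : Matrix.SpecialLinearGroup (Fin 2) ℚ), ∀ g, rep g = y → g = 1 := by
  have hv : ∀ t, 0 < arcForm t ![5, 2] := by
    rintro ⟨_ | _, _ | _⟩ <;> norm_num [arcForm]
  have hy : ∀ᶠ y in 𝓝 (1 : Matrix.SpecialLinearGroup (Fin 2) ℚ), ∀ t,
      0 < arcForm t (y • ![5, 2]) := by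
    refine eventually_all.2 fun t => ?_
    refine ((continuous_arcForm t).comp (continuous_specialLinearGroup_smul _)).continuousAt
      |>.eventually_const_lt ?_
    simpa using hv t
  filter_upwards [hy]
  rintro _ hpos g rfl
  by_contra hg
  obtain ⟨s, hs⟩ := exists_arcForm_rep_smul_neg hg hv
  exact hs.not_gt (hpos s)

theorem conj_of_notMem_zpowers_boundary (g : FreeGroup Bool) (x : Bool) :
    g⁻¹ * FreeGroup.of x * g ∉ Subgroup.zpowers boundary := by
  let degree : FreeGroup Bool →* Multiplicative ℤ := FreeGroup.lift fun _ => Multiplicative.ofAdd 1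
  have hboundary : degree boundary = 1 :=
    (map_commutatorElement _ _ _).trans (commutatorElement_eq_one_iff_mul_comm.2 (mul_comm _ _))
  have hconj : degree (g⁻¹ * FreeGroup.of x * g) = Multiplicative.ofAdd 1 := by
    rw [map_mul, map_mul, map_inv, inv_mul_cancel_comm, FreeGroup.lift_apply_of]
  rintro ⟨n, hn⟩
  rw [← hn, map_zpow, hboundary, one_zpow] at hconj
  exact absurd hconj (by decide)

theorem rep_smul_ne_of_gapForm_neg (g : FreeGroup Bool) {v : Fin 2 → ℚ}
    (hv : gapForm (true, true) v < 0) : rep g • v ≠ ![1, 0] := by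
  intro hgv
  have heq : rep (g⁻¹ * FreeGroup.of true * g) • v = (3 : ℚ) • v := by
    have hscale : rep (FreeGroup.of true) • (![1, 0] : Fin 2 → ℚ) = (3 : ℚ) • ![1, 0] := by
      rw [FreeGroup.of, rep_letter_smul]
      norm_num [letterAct]
    have hlin : rep g • (3 : ℚ) • v = (3 : ℚ) • rep g • v := smul_comm _ _ _
    rw [map_mul, map_mul, map_inv, mul_smul, mul_smul, inv_smul_eq_iff, hlin, hgv, hscale]
  have hpos := gapForm_rep_smul_pos (conj_of_notMem_zpowers_boundary g true) hv
  rw [heq] at hpos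
  simp only [gapForm, Pi.smul_apply, smul_eq_mul] at hpos hv
  linarith

/-- The reflection of the hyperbolic plane in the axis of `rep boundary`, scaled by `√7` to make it
rational. -/
def mirror : GL (Fin 2) ℚ :=
  Matrix.GeneralLinearGroup.mkOfDetNeZero !![-4, 9; -1, 4] (by norm_num [Matrix.det_fin_two])

theorem mirror_smul (v : Fin 2 → ℚ) :
    mirror • v = ![-4 * v 0 + 9 * v 1, -1 * v 0 + 4 * v 1] :=
  Matrix.mulVec_fin_two _ v

theorem gapForm_mirror_smul (v : Fin 2 → ℚ) :
    gapForm (true, true) (mirror • v) = -7 * gapForm (true, true) v := by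
  simp only [mirror_smul, gapForm, Matrix.cons_val_zero, Matrix.cons_val_one]
  ring

theorem rep_boundary_smul (v : Fin 2 → ℚ) :
    rep boundary • v =
      ![-119 / 9 * v 0 + 160 / 9 * v 1, -160 / 81 * v 0 + 209 / 81 * v 1] := by
  have hword : boundary =
      FreeGroup.mk [(true, true), (false, true), (true, false), (false, false)] := rfl
  simp only [hword, rep_mk_cons _ (_ :: _), rep_letter_smul, letterAct, Matrix.cons_val_zero,
    Matrix.cons_val_one]
  congr <;> ring_nf

theorem conjBy_mirror_rep_boundary : conjBy mirror (rep boundary) = rep boundary := by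
  refine conjBy_eq_self fun v => ?_
  simp only [rep_boundary_smul, mirror_smul, Matrix.cons_val_zero, Matrix.cons_val_one]
  congr 1
  · ring
  · congr 1
    ring

end HoledTorus

/-- The fundamental group of the double of the one-holed torus along its boundary: the amalgamated
product of two copies of the free group over the subgroup generated by `boundary`. -/
abbrev DoubledTorus : Type :=
  PushoutI fun _ : Bool => (Subgroup.zpowers HoledTorus.boundary).subtype

namespace DoubledTorus

open HoledTorus

section UniversalProperty

/-- The inclusion of one of the two copies of the free group. -/
def ofSide (s : Bool) : FreeGroup Bool →* DoubledTorus :=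
  PushoutI.of (G := fun _ => FreeGroup Bool) s

theorem base_eq_ofSide (s : Bool) (c : Subgroup.zpowers boundary) :
    PushoutI.base _ c = ofSide s c :=
  (PushoutI.of_apply_eq_base (fun _ : Bool => (Subgroup.zpowers boundary).subtype) s c).symm

theorem ofSide_boundary (s t : Bool) : ofSide s boundary = ofSide t boundary :=
  let c : Subgroup.zpowers boundary := ⟨boundary, Subgroup.mem_zpowers _⟩
  (base_eq_ofSide s c).symm.trans (base_eq_ofSide t c)

variable {K : Type*} [Group K]

/-- The universal property of the amalgamated product. -/
def lift (f : Bool → FreeGroup Bool →* K) (h : f false boundary = f true boundary) :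
    DoubledTorus →* K :=
  PushoutI.lift f ((f true).comp (Subgroup.zpowers boundary).subtype) <| by
    rintro (_ | _)
    · ext1 ⟨_, n, rfl⟩
      change f false (boundary ^ n) = f true (boundary ^ n)
      rw [map_zpow, map_zpow, h]
    · rfl

@[simp]
theorem lift_ofSide (f : Bool → FreeGroup Bool →* K) (h : f false boundary = f true boundary)
    (s : Bool) (x : FreeGroup Bool) : lift f h (ofSide s x) = f s x :=
  PushoutI.lift_of (G := fun _ => FreeGroup Bool) _ _ _ x

end UniversalProperty

section Rep

/-- The representations of the two copies of the free group, which are mirror images of each other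
in the axis of `HoledTorus.rep boundary`. -/
def sideRep : Bool → FreeGroup Bool →* Matrix.SpecialLinearGroup (Fin 2) ℚ
  | true => HoledTorus.rep
  | false => (conjBy mirror).comp HoledTorus.rep

/-- The representation of the group of the double that extends both `sideRep`s. -/
def rep : DoubledTorus →* Matrix.SpecialLinearGroup (Fin 2) ℚ :=
  lift sideRep conjBy_mirror_rep_boundary

theorem rep_ofSide (s : Bool) (g : FreeGroup Bool) : rep (ofSide s g) = sideRep s g :=
  lift_ofSide _ _ _ _

/-- The vectors whose class in the projective line lies on a given side of the fixed points of
`HoledTorus.rep boundary`. Elements of the copy `s` of the free group that are not powers of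
`boundary` map `side (!s)` into `side s`. -/
def side : Bool → Set (Fin 2 → ℚ)
  | true => {v | 0 < gapForm (true, true) v}
  | false => {v | gapForm (true, true) v < 0}

theorem isOpen_side : ∀ s, IsOpen (side s)
  | true => isOpen_lt continuous_const (continuous_gapForm _)
  | false => isOpen_lt (continuous_gapForm _) continuous_const

theorem mirror_smul_mem_side_iff {s : Bool} {v : Fin 2 → ℚ} :
    mirror • v ∈ side s ↔ v ∈ side (!s) := by
  cases s <;>
    simp only [side, Set.mem_ofPred, gapForm_mirror_smul, Bool.not_true, Bool.not_false] <;>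
    constructor <;> intro _ <;> linarith

theorem disjoint_side_not (s : Bool) : Disjoint (side s) (side (!s)) := by
  cases s
  · exact Set.disjoint_left.2 fun _ h h' => lt_asymm (Set.mem_ofPred.1 h) h'
  · exact Set.disjoint_left.2 fun _ h h' => lt_asymm (Set.mem_ofPred.1 h) h'

/-- A fixed point of `genMatrix true`, and its mirror image. No element of a copy of the free group
moves a vector of the opposite side there. -/
def fixedPoint : Bool → Fin 2 → ℚ
  | true => ![1, 0]
  | false => mirror • ![1, 0]

theorem fixedPoint_true_mem : fixedPoint true ∈ side true := by
  norm_num [side, fixedPoint, gapForm]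

theorem sideRep_true_smul_mem {g : FreeGroup Bool} (hg : g ∉ Subgroup.zpowers boundary)
    {v : Fin 2 → ℚ} (hv : v ∈ side false) : sideRep true g • v ∈ side true \ {fixedPoint true} :=
  ⟨gapForm_rep_smul_pos hg hv, rep_smul_ne_of_gapForm_neg g hv⟩

theorem sideRep_false_smul_mem {g : FreeGroup Bool} (hg : g ∉ Subgroup.zpowers boundary)
    {v : Fin 2 → ℚ} (hv : v ∈ side true) :
    sideRep false g • v ∈ side false \ {fixedPoint false} := by
  rw [← smul_inv_smul mirror v, mirror_smul_mem_side_iff] at hv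
  obtain ⟨hmem, hne⟩ := sideRep_true_smul_mem hg hv
  rw [sideRep, MonoidHom.comp_apply, conjBy_smul]
  exact ⟨mirror_smul_mem_side_iff.2 hmem, fun h => hne (smul_left_cancel mirror h)⟩

theorem amalgamPingPong_rep : AmalgamPingPong rep side fixedPoint where
  disjoint s t hst := by
    rw [Bool.eq_not.2 hst.symm]
    exact disjoint_side_not s
  mem
    | true => fixedPoint_true_mem
    | false => mirror_smul_mem_side_iff.2 fixedPoint_true_mem
  smul_mem s t hst g hg v hv := by
    rw [Subgroup.range_subtype] at hg
    obtain rfl : t = !s := Bool.eq_not.2 hst.symm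
    change rep (ofSide s g) • v ∈ side s \ {fixedPoint s}
    rw [rep_ofSide]
    cases s
    · exact sideRep_false_smul_mem hg hv
    · exact sideRep_true_smul_mem hg hv

theorem eventually_rep_fiber_subset_one :
    ∀ᶠ y in 𝓝 (1 : Matrix.SpecialLinearGroup (Fin 2) ℚ), ∀ w, rep w = y → w = 1 := by
  filter_upwards [HoledTorus.eventually_rep_fiber_subset_one,
    amalgamPingPong_rep.eventually_mem_range_base (fun _ => Subtype.val_injective) isOpen_side
      fun _ => continuous_specialLinearGroup_smul _] with y hside hbase w hw
  obtain ⟨c, rfl⟩ := hbase w hw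
  rw [base_eq_ofSide true, rep_ofSide] at hw
  rw [base_eq_ofSide true, hside c hw, map_one]

end Rep

/-- The identification of the genus-two surface with the double of the one-holed torus. The mirror
reverses the orientation of the second half, so its two generators are interchanged. -/
def ofSurfaceGroup : SurfaceGroup 2 →* DoubledTorus :=
  SurfaceGroup.lift ![ofSide true (.of true), ofSide false (.of false)]
    ![ofSide true (.of false), ofSide false (.of true)] <| by
    have h : ⁅ofSide true (.of true), ofSide true (.of false)⁆ *
        ⁅ofSide false (.of false), ofSide false (.of true)⁆ = 1 := by
      rw [← map_commutatorElement, ← map_commutatorElement,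
        ← commutatorElement_inv (FreeGroup.of true) (FreeGroup.of false), map_inv]
      exact mul_inv_eq_one.2 (ofSide_boundary true false)
    simp only [List.ofFn_succ, List.ofFn_zero, List.prod_cons, List.prod_nil, mul_one]
    exact h

/-- A left inverse of `ofSurfaceGroup`. -/
def toSurfaceGroup : DoubledTorus →* SurfaceGroup 2 :=
  lift
    (fun
      | true => FreeGroup.lift fun x => bif x then SurfaceGroup.a 0 else SurfaceGroup.b 0
      | false => FreeGroup.lift fun x => bif x then SurfaceGroup.b 1 else SurfaceGroup.a 1) <| by
    simp only [boundary, map_commutatorElement, FreeGroup.lift_apply_of, cond_true, cond_false]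
    rw [← commutatorElement_inv, inv_eq_iff_mul_eq_one, mul_eq_one_comm]
    exact SurfaceGroup.commutator_mul_commutator_eq_one

theorem ofSurfaceGroup_injective : Function.Injective ofSurfaceGroup := by
  have h : toSurfaceGroup.comp ofSurfaceGroup = MonoidHom.id _ := by
    refine SurfaceGroup.hom_ext (fun i => ?_) fun i => ?_ <;> fin_cases i <;>
      simp [toSurfaceGroup, ofSurfaceGroup]
  exact Function.LeftInverse.injective (g := toSurfaceGroup) (DFunLike.congr_fun h)

end DoubledTorus

theorem SurfaceGroup.exists_rep_eventually_fiber_subset_one (n : ℕ) :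
    ∃ f : SurfaceGroup (n + 2) →* Matrix.SpecialLinearGroup (Fin 2) ℚ,
      ∀ᶠ y in 𝓝 1, ∀ x, f x = y → x = 1 := by
  refine ⟨DoubledTorus.rep.comp (DoubledTorus.ofSurfaceGroup.comp (cyclicCover n)), ?_⟩
  have hinj := DoubledTorus.ofSurfaceGroup_injective.comp (cyclicCover_injective n)
  filter_upwards [DoubledTorus.eventually_rep_fiber_subset_one] with y hy x hx
  exact (map_eq_one_iff (DoubledTorus.ofSurfaceGroup.comp (cyclicCover n)) hinj).1 (hy _ hx)

/-- For every `g ≥ 2` there is a discrete and faithful representation of the genus-`g`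
surface group into `SL(2,ℝ)` all of whose matrix entries are rational. -/
theorem exists_discrete_faithful_rational_rep (g : ℕ) (hg : 2 ≤ g) :
    ∃ ρ : SurfaceGroup g →* Matrix.SpecialLinearGroup (Fin 2) ℝ,
      Function.Injective ρ ∧
      (∀ x : SurfaceGroup g, ∀ i j,
        ((ρ x : Matrix.SpecialLinearGroup (Fin 2) ℝ) : Matrix (Fin 2) (Fin 2) ℝ) i j ∈
          Set.range ((↑) : ℚ → ℝ)) ∧
      DiscreteTopology ↥ρ.range := by
  obtain ⟨n, rfl⟩ := Nat.exists_eq_add_of_le' hg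
  obtain ⟨f, hf⟩ := SurfaceGroup.exists_rep_eventually_fiber_subset_one n
  have hcast : IsInducing (Matrix.SpecialLinearGroup.map (n := Fin 2) (algebraMap ℚ ℝ)) :=
    Rat.isDenseEmbedding_coe_real.isInducing.specialLinearGroup_map
  have hreal := eventually_comp_fiber_subset_one hcast hf
  exact ⟨_, injective_of_eventually_fiber_subset_one hreal,
    fun x i j => ⟨f x i j, rfl⟩, discreteTopology_range_of_eventually_fiber_subset_one hreal⟩
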